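/- Let S, L, c, d be nonnegative real numbers such that S - L ≤ c·√S + d. Then √S ≤ √L + c + √d. -/

import Mathlib

theorem le_add_of_sq_le_mul_add_sq {R : Type*} [Ring R] [LinearOrder R] [IsStrictOrderedRing R]
    {x y c : R} (hc : 0 ≤ c) (hy : 0 ≤ y) (h : x ^ 2 ≤ c * x + y ^ 2) : x ≤ c + y := by
  contrapose! h
  have y_lt_sub : y < x - c := lt_sub_iff_add_lt'.mpr h
  have y_lt : y < x := y_lt_sub.trans_le (sub_le_self x hc)
  calc c * x + y ^ 2 = c * x + y * y := by rw [sq]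
    _ < c * x + (x - c) * x := by gcongr c * x + ?_; exact mul_lt_mul'' y_lt_sub y_lt hy hy
    _ = x ^ 2 := by rw [sub_mul, add_sub_cancel, sq]

theorem sqrt_add_le_add_sqrt (a b : ℝ) : √(a + b) ≤ √a + √b := by
  have le_sq_sqrt (x : ℝ) : x ≤ √x ^ 2 := (Real.sqrt_le_iff.mp le_rfl).2
  refine Real.sqrt_le_iff.mpr ⟨by positivity, ?_⟩
  calc a + b ≤ √a ^ 2 + √b ^ 2 := add_le_add (le_sq_sqrt a) (le_sq_sqrt b)
    _ ≤ (√a + √b) ^ 2 :=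
      pow_add_pow_le (Real.sqrt_nonneg a) (Real.sqrt_nonneg b) two_ne_zero

/-- Improvement for small losses: if `S - L ≤ c·√S + d` with all quantities
nonnegative, then `√S ≤ √L + c + √d`. -/
theorem sqrt_le_sqrt_add_of_sub_le (S L c d : ℝ)
    (hS : 0 ≤ S) (hL : 0 ≤ L) (hc : 0 ≤ c) (hd : 0 ≤ d)
    (h : S - L ≤ c * Real.sqrt S + d) :
    Real.sqrt S ≤ Real.sqrt L + c + Real.sqrt d := by
  have sq_le : √S ^ 2 ≤ c * √S + √(L + d) ^ 2 := by
    rw [Real.sq_sqrt hS, Real.sq_sqrt (add_nonneg hL hd)]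
    linarith
  calc √S ≤ c + √(L + d) := le_add_of_sq_le_mul_add_sq hc (Real.sqrt_nonneg _) sq_le
    _ ≤ c + (√L + √d) := by gcongr; exact sqrt_add_le_add_sqrt L d
    _ = √L + c + √d := by ring
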